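/- arXiv:2406.10055 — 2 statements merged into one kernel-verified Lean document; each statement's English description precedes it below -/
import Mathlib

section
/- Let K be a convex body (compact convex set with nonempty interior) in the Euclidean plane ℝ². Suppose that for all rigid motions φ, ψ of ℝ², whenever the intersection (φ K) ∩ (ψ K) has nonempty interior, this intersection is centrally symmetric (i.e., there is a point c such that the point reflection through c maps the intersection onto itself). Then K is a closed Euclidean disk. -/
open Metric

/-- A set in the plane is centrally symmetric if some point reflection maps it onto itself. -/
def CentrallySymmetric (S : Set (EuclideanSpace ℝ (Fin 2))) : Prop :=
  ∃ c : EuclideanSpace ℝ (Fin 2), S = (fun x => (2 : ℝ) • c - x) '' S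

/-!
Let `K` be symmetric about `0`, with inradius `r` and circumradius `R`. Translate a rotated copy `L`
of `K` so that a support point `x` of `K` in direction `u` lies inside it while its own lowest point
`w` lies inside `K`. Then `x` and `w` are the extreme points of the intersection in direction `u`,
so `(x + w) / 2` must be its centre, and reflecting in it shows that near `x` the body `K` coincides
with the translate of `L` that touches the same supporting hyperplane at `x`. This needs a unique
support point on `L`, which a point of norm `R` provides. Comparing through it, any two rotated
copies of `K` have the same germ, of uniform size, at boundary points with equal outer normals.

Now rotate `K` so that a point of norm `R` has the outer normal of a boundary point `q` of norm `r`,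
and translate it to `q`. The two bodies agree near `q`, hence, by continuation along the connected
boundary, near every boundary point of `K`. The points `± p ∈ K` of norm `R` thus lie in a translate
of the ball of radius `R`, so the translation is trivial and `r = R`.
-/

open scoped Pointwise Topology RealInnerProductSpace

lemma mem_vadd_set_iff_sub_mem {G : Type*} [AddCommGroup G] {a z : G} {L : Set G} :
    z ∈ a +ᵥ L ↔ z - a ∈ L := by
  rw [Set.mem_vadd_set_iff_neg_vadd_mem, vadd_eq_add, neg_add_eq_sub]

section TopologicalVectorSpace

variable {V : Type*} [AddCommGroup V] [Module ℝ V] [TopologicalSpace V] [IsTopologicalAddGroup V]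
  [ContinuousSMul ℝ V] {K s : Set V} {x : V}

lemma nonempty_interior_inter_of_mem_nhds (hK : Convex ℝ K) (hK' : (interior K).Nonempty)
    (hx : x ∈ K) (hs : s ∈ 𝓝 x) : (interior (K ∩ s)).Nonempty := by
  have hx' : x ∈ closure (interior K) := by
    rw [hK.closure_interior_eq_closure_of_nonempty_interior hK']
    exact subset_closure hx
  rw [interior_inter, Set.inter_comm]
  exact mem_closure_iff_nhds.1 hx' _ (interior_mem_nhds.2 hs)

lemma zero_mem_interior_of_neg_mem (hK : Convex ℝ K) (hneg : ∀ z ∈ K, -z ∈ K)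
    (hint : (interior K).Nonempty) : 0 ∈ interior K := by
  obtain ⟨a, ha⟩ := hint
  have hmid := hK.combo_interior_self_mem_interior ha (hneg a (interior_subset ha))
    one_half_pos one_half_pos.le (add_halves 1)
  rwa [smul_neg, add_neg_cancel] at hmid

end TopologicalVectorSpace

section NormedSpace

variable {E : Type*} [NormedAddCommGroup E] [NormedSpace ℝ E] {K L s : Set E} {u p : E} {r R l : ℝ}

lemma isPreconnected_frontier_of_convex (hE : 1 < Module.rank ℝ E) (hK : Convex ℝ K)
    (hint : (interior K).Nonempty) (hb : Bornology.IsBounded K) :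
    IsPreconnected (frontier K) := by
  obtain ⟨e, -, -, he⟩ :=
    exists_homeomorph_image_interior_closure_frontier_eq_unitBall hK hint hb
  rw [← e.isPreconnected_image, he]
  exact isPreconnected_sphere hE 0 1

lemma closedBall_one_sub_smul_subset (hK : Convex ℝ K) (hr : closedBall 0 r ⊆ K) (hp : p ∈ K)
    (hl : 0 < l) (hl' : l ≤ 1) : closedBall ((1 - l) • p) (l * r) ⊆ K := by
  intro z hz
  have hmem : l⁻¹ • (z - (1 - l) • p) ∈ K := by
    apply hr
    rw [mem_closedBall, dist_eq_norm] at hz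
    rwa [mem_closedBall_zero_iff, norm_smul, norm_inv, Real.norm_of_nonneg hl.le,
      inv_mul_le_iff₀ hl]
  have hcombo := hK hp hmem (sub_nonneg.2 hl') hl.le (sub_add_cancel 1 l)
  rwa [smul_inv_smul₀ hl.ne', add_sub_cancel] at hcombo

lemma mem_frontier_of_subset_closedBall (hK : K ⊆ closedBall 0 ‖p‖) (hp : p ∈ K) (hp0 : p ≠ 0) :
    p ∈ frontier K := by
  refine ⟨subset_closure hp, fun hint ↦ ?_⟩
  have := interior_mono hK hint
  rw [interior_closedBall _ (norm_ne_zero_iff.2 hp0), mem_ball_zero_iff] at this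
  exact this.false

/-- An origin-symmetric convex set lying between the balls of radii `r` and `R` about the origin. -/
structure IsSymmConvexBetween (r R : ℝ) (K : Set E) : Prop where
  convex : Convex ℝ K
  neg_mem : ∀ z ∈ K, -z ∈ K
  closedBall_subset : closedBall 0 r ⊆ K
  subset_closedBall : K ⊆ closedBall 0 R

lemma IsSymmConvexBetween.image (hK : IsSymmConvexBetween r R K) (g : E ≃ₗᵢ[ℝ] E) :
    IsSymmConvexBetween r R (g '' K) where
  convex := hK.convex.linear_image g.toLinearEquiv.toLinearMap
  neg_mem := by
    rintro _ ⟨z, hz, rfl⟩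
    exact ⟨-z, hK.neg_mem z hz, map_neg g z⟩
  closedBall_subset := by
    simpa using Set.image_mono (f := g) hK.closedBall_subset
  subset_closedBall := by
    simpa using Set.image_mono (f := g) hK.subset_closedBall

lemma IsSymmConvexBetween.le_of_norm_eq_one (hK : IsSymmConvexBetween r R K) (hr : 0 ≤ r)
    (hu : ‖u‖ = 1) : r ≤ R := by
  have hmem : r • u ∈ closedBall (0 : E) r := by
    simp [norm_smul, hu, abs_of_nonneg hr]
  simpa [norm_smul, hu, abs_of_nonneg hr] using
    hK.subset_closedBall (hK.closedBall_subset hmem)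

/-- Some point reflection maps `S` onto itself: the analogue of `CentrallySymmetric` in an arbitrary
real vector space. -/
def IsPointSymmetric (S : Set E) : Prop :=
  ∃ c : E, S = (fun x ↦ (2 : ℝ) • c - x) '' S

/-- The hypothesis of High's theorem: two congruent copies of `K` meet in a point-symmetric set as
soon as they have a common interior point. -/
def HasSymmetricIntersections (K : Set E) : Prop :=
  ∀ φ ψ : E ≃ᵢ E, (interior (φ '' K ∩ ψ '' K)).Nonempty → IsPointSymmetric (φ '' K ∩ ψ '' K)

/-- The part of `HasSymmetricIntersections` that concerns two fixed sets and moves one of them by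
translations only. -/
def MeetsTranslatesSymmetrically (K L : Set E) : Prop :=
  ∀ a : E, (interior (K ∩ (a +ᵥ L))).Nonempty → IsPointSymmetric (K ∩ (a +ᵥ L))

lemma IsPointSymmetric.exists_sub_mem (hs : IsPointSymmetric s) :
    ∃ c : E, ∀ z ∈ s, (2 : ℝ) • c - z ∈ s := by
  obtain ⟨c, hc⟩ := hs
  exact ⟨c, fun z hz ↦ hc.superset ⟨z, hz, rfl⟩⟩

lemma HasSymmetricIntersections.isPointSymmetric (H : HasSymmetricIntersections K)
    (hint : (interior K).Nonempty) : IsPointSymmetric K := by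
  have hid : IsometryEquiv.refl E '' K = K := Set.image_id K
  simpa only [hid, Set.inter_self] using
    H (.refl E) (.refl E) (by simpa only [hid, Set.inter_self] using hint)

lemma HasSymmetricIntersections.vadd (H : HasSymmetricIntersections K) (a : E) :
    HasSymmetricIntersections (a +ᵥ K) := fun φ ψ ↦ by
  have himage (φ : E ≃ᵢ E) : φ '' (a +ᵥ K) = (IsometryEquiv.addLeft a).trans φ '' K :=
    Set.image_image _ _ _
  rw [himage, himage]
  exact H _ _

lemma HasSymmetricIntersections.meetsTranslatesSymmetrically_image
    (H : HasSymmetricIntersections K) (g h : E ≃ₗᵢ[ℝ] E) :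
    MeetsTranslatesSymmetrically (g '' K) (h '' K) := fun a ↦ by
  have : a +ᵥ h '' K = h.toIsometryEquiv.trans (IsometryEquiv.addLeft a) '' K :=
    Set.image_image _ _ _
  rw [this]
  exact H g.toIsometryEquiv _

end NormedSpace

section InnerProductSpace

variable {E : Type*} [NormedAddCommGroup E] [InnerProductSpace ℝ E] {K L N K' s : Set E}
  {u v x y w p b : E} {r R δ η l : ℝ}

/-! ### Supporting hyperplanes -/

lemma exists_unit_isMaxOn_inner [CompleteSpace E] (hK : Convex ℝ K)
    (hint : (interior K).Nonempty) (hx : x ∉ interior K) :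
    ∃ u : E, ‖u‖ = 1 ∧ IsMaxOn (inner ℝ u) K x := by
  obtain ⟨f, hf, hmax⟩ := geometric_hahn_banach_of_nonempty_interior_point hK hx hint
  obtain ⟨v, rfl⟩ := (InnerProductSpace.toDual ℝ E).surjective f
  have hv : v ≠ 0 := by simpa using hf
  refine ⟨‖v‖⁻¹ • v, norm_smul_inv_norm hv, fun z hz ↦ ?_⟩
  have := hmax z hz
  simp only [InnerProductSpace.toDual_apply_apply] at this
  simp only [Set.mem_ofPred_eq, real_inner_smul_left]
  gcongr

lemma isMaxOn_inner_of_inter_eq (hK' : Convex ℝ K') (hy : y ∈ K') (hs : s ∈ 𝓝 y)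
    (heq : K ∩ s = K' ∩ s) (hmax : IsMaxOn (inner ℝ u) K y) : IsMaxOn (inner ℝ u) K' y := by
  refine IsMaxOn.of_isLocalMaxOn_of_concaveOn hy ?_ ((innerₗ E u).concaveOn hK')
  filter_upwards [mem_nhdsWithin_of_mem_nhds hs, self_mem_nhdsWithin] with z hzs hzK'
  exact hmax (heq.superset ⟨hzK', hzs⟩).1

lemma inner_lt_of_norm_le (hu : ‖u‖ = 1) (hx : ‖x‖ ≤ R) (hne : x ≠ R • u) :
    ⟪u, x⟫ < ⟪u, R • u⟫ := by
  rw [inner_smul_right, real_inner_self_eq_norm_sq, hu, one_pow, mul_one]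
  have hle : ⟪u, x⟫ ≤ ‖x‖ := by simpa [hu] using real_inner_le_norm u x
  refine (hle.trans hx).lt_of_ne fun heq ↦ hne ?_
  have hnorm : ‖x‖ = R := le_antisymm hx (heq ▸ hle)
  have := inner_eq_norm_mul_iff_real.1 (show ⟪u, x⟫ = ‖u‖ * ‖x‖ by rw [hu, one_mul, hnorm, heq])
  rwa [hu, one_smul, hnorm, eq_comm] at this

lemma eq_zero_of_norm_add_le_of_norm_sub_le (hadd : ‖p + b‖ ≤ ‖p‖) (hsub : ‖p - b‖ ≤ ‖p‖) :
    b = 0 := by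
  have := parallelogram_law_with_norm ℝ p b
  rw [← norm_eq_zero]
  nlinarith [norm_nonneg b, norm_nonneg (p + b), norm_nonneg (p - b)]

lemma exists_linearIsometryEquiv_apply_eq (h : ‖x‖ = ‖y‖) : ∃ g : E ≃ₗᵢ[ℝ] E, g x = y :=
  ⟨_, Submodule.reflection_sub h⟩

/-! ### Touching translates agree near the point of contact -/

lemma two_smul_center_eq {c : E} (hL : ∀ z ∈ L, -z ∈ L)
    (hc : ∀ z ∈ K ∩ ((w + y) +ᵥ L), (2 : ℝ) • c - z ∈ K ∩ ((w + y) +ᵥ L))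
    (hx : x ∈ K ∩ ((w + y) +ᵥ L)) (hxu : IsMaxOn (inner ℝ u) K x)
    (hw : w ∈ K) (hy : y ∈ L) (hyu : ∀ z ∈ L, z ≠ y → ⟪u, z⟫ < ⟪u, y⟫) :
    (2 : ℝ) • c = x + w := by
  have hwL : w ∈ (w + y) +ᵥ L :=
    mem_vadd_set_iff_sub_mem.2 (by simpa only [sub_add_cancel_left] using hL y hy)
  have htop : ⟪u, (2 : ℝ) • c - w⟫ ≤ ⟪u, x⟫ := hxu (hc w ⟨hw, hwL⟩).1
  have hbottom : x + w + y - (2 : ℝ) • c ∈ L := by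
    convert hL _ (mem_vadd_set_iff_sub_mem.1 (hc x hx).2) using 1
    abel
  by_contra hne
  have hlt := hyu _ hbottom fun heq ↦ hne (by rw [sub_eq_iff_eq_add] at heq; grind)
  simp only [inner_sub_right, inner_add_right] at htop hlt
  linarith

/-- `w` is the lowest point of the translate `(w + y) +ᵥ L`, whose intersection with `K` is
reflected in `(x + w) / 2`. -/
lemma MeetsTranslatesSymmetrically.inter_closedBall_eq (hKL : MeetsTranslatesSymmetrically K L)
    (hK : Convex ℝ K) (hL : ∀ z ∈ L, -z ∈ L) (hδ : 0 < δ)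
    (hx : x ∈ K) (hxu : IsMaxOn (inner ℝ u) K x)
    (hy : y ∈ L) (hyu : ∀ z ∈ L, z ≠ y → ⟪u, z⟫ < ⟪u, y⟫)
    (hwK : closedBall w δ ⊆ K) (hxL : closedBall (x - (w + y)) δ ⊆ L) :
    K ∩ closedBall x δ = ((x - y) +ᵥ L) ∩ closedBall x δ := by
  have hball : closedBall x δ ⊆ (w + y) +ᵥ L := fun z hz ↦
    mem_vadd_set_iff_sub_mem.2 (hxL (by rwa [mem_closedBall, dist_sub_right]))
  have hKint : (interior K).Nonempty :=
    ⟨w, interior_mono hwK (ball_subset_interior_closedBall (mem_ball_self hδ))⟩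
  obtain ⟨c, hc⟩ := (hKL (w + y) (nonempty_interior_inter_of_mem_nhds hK hKint hx
    (Filter.mem_of_superset (closedBall_mem_nhds x hδ) hball))).exists_sub_mem
  have hxw : (2 : ℝ) • c = x + w := two_smul_center_eq hL hc
    ⟨hx, hball (mem_closedBall_self hδ.le)⟩ hxu (hwK (mem_closedBall_self hδ.le)) hy hyu
  rw [hxw] at hc
  ext z
  refine and_congr_left fun hz ↦ ⟨fun hzK ↦ ?_, fun hzL ↦ ?_⟩
  · have hreflect := hL _ (mem_vadd_set_iff_sub_mem.1 (hc z ⟨hzK, hball hz⟩).2)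
    rw [mem_vadd_set_iff_sub_mem]
    convert hreflect using 1
    abel
  · have hreflectK : x + w - z ∈ K := hwK (by
      rw [mem_closedBall, dist_eq_norm] at hz ⊢
      rwa [← norm_neg, show -(x + w - z - w) = z - x by abel])
    have hreflectL : x + w - z ∈ (w + y) +ᵥ L := by
      rw [mem_vadd_set_iff_sub_mem] at hzL ⊢
      convert hL _ hzL using 1
      abel
    simpa using (hc _ ⟨hreflectK, hreflectL⟩).1

/-- Rolling `L` against the flat side of `N` makes `L` inherit the inner ball of `N` at its tip. -/
lemma MeetsTranslatesSymmetrically.closedBall_subset_of_smul_mem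
    (hNL : MeetsTranslatesSymmetrically N L) (hN : IsSymmConvexBetween r R N)
    (hL : IsSymmConvexBetween r R L) (hr : 0 < r) (hu : ‖u‖ = 1) (hNu : ∀ z ∈ N, ⟪u, z⟫ ≤ r)
    (htip : R • u ∈ L) :
    closedBall ((R - r ^ 2 / (2 * R)) • u) (r ^ 2 / (2 * R)) ⊆ L := by
  have hrR : r ≤ R := hL.le_of_norm_eq_one hr.le hu
  have hR : 0 < R := hr.trans_le hrR
  set η := r ^ 2 / (2 * R) with hη
  have hηR : r / R * r = 2 * η := by rw [hη]; field_simp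
  have hηr : η ≤ r / 2 := by
    rw [hη, div_le_iff₀ (by positivity)]
    nlinarith
  have hη0 : 0 < η := by positivity
  have hruN : r • u ∈ N := hN.closedBall_subset (by simp [norm_smul, hu, abs_of_pos hr])
  have hbelow : closedBall (r • u - (0 + R • u)) (2 * η) ⊆ L := by
    convert closedBall_one_sub_smul_subset hL.convex hL.closedBall_subset (hL.neg_mem _ htip)
      (div_pos hr hR) ((div_le_one hR).2 hrR) using 2
    · rw [smul_neg, smul_smul, sub_mul, div_mul_cancel₀ r hR.ne']
      module
    · exact hηR.symm
  have hagree : N ∩ closedBall (r • u) (2 * η) =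
      ((r • u - R • u) +ᵥ L) ∩ closedBall (r • u) (2 * η) :=
    hNL.inter_closedBall_eq hN.convex hL.neg_mem (by positivity) hruN
      (fun z hz ↦ by simpa [inner_smul_right, hu] using hNu z hz) htip
      (fun z hz ↦ inner_lt_of_norm_le hu (mem_closedBall_zero_iff.1 (hL.subset_closedBall hz)))
      ((closedBall_subset_closedBall (by linarith)).trans hN.closedBall_subset) hbelow
  have hball : closedBall ((r - η) • u) η ⊆ N ∩ closedBall (r • u) (2 * η) := by
    refine Set.subset_inter (.trans (closedBall_subset_closedBall' ?_) hN.closedBall_subset)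
      (closedBall_subset_closedBall' ?_)
    · rw [dist_zero_right, norm_smul, hu, Real.norm_of_nonneg (by linarith)]
      linarith
    · rw [dist_eq_norm, ← sub_smul, norm_smul, hu, sub_sub_cancel_left, norm_neg,
        Real.norm_of_nonneg hη0.le]
      linarith
  have hL' := (hball.trans hagree.subset).trans Set.inter_subset_left
  rw [Set.subset_vadd_set_iff, Metric.vadd_closedBall, vadd_eq_add] at hL'
  convert hL' using 2
  module

lemma closedBall_smul_subset_closedBall_smul (hu : ‖u‖ = 1) (hx : ‖x‖ ≤ R) (hxu : r ≤ ⟪u, x⟫)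
    (hr : 0 ≤ r) (hl : 0 ≤ l) (hη : 0 ≤ η) (hlr : l * r ≤ η) (hlR : l * R ^ 2 = η * r) :
    closedBall (l • x) (l * r / 2) ⊆ closedBall (η • u) η := by
  refine closedBall_subset_closedBall' ?_
  suffices ‖l • x - η • u‖ ≤ η - l * r / 2 by rw [dist_eq_norm]; linarith
  have hlr0 : 0 ≤ l * r := by positivity
  have hxsq : ‖x‖ ^ 2 ≤ R ^ 2 := by gcongr
  refine le_of_sq_le_sq ?_ (by linarith)
  calc ‖l • x - η • u‖ ^ 2 = l * (l * ‖x‖ ^ 2) - 2 * (l * η) * ⟪u, x⟫ + η ^ 2 := by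
        rw [norm_sub_sq_real, inner_smul_left, inner_smul_right, norm_smul, norm_smul, hu,
          mul_pow, Real.norm_eq_abs, sq_abs, Real.norm_of_nonneg hη, real_inner_comm]
        simp only [conj_trivial]
        ring
    _ ≤ l * (l * R ^ 2) - 2 * (l * η) * r + η ^ 2 := by gcongr
    _ = η ^ 2 - η * (l * r) := by rw [hlR]; ring
    _ ≤ (η - l * r / 2) ^ 2 := by nlinarith

lemma MeetsTranslatesSymmetrically.inter_closedBall_eq_of_smul_mem
    (hKL : MeetsTranslatesSymmetrically K L) (hK : IsSymmConvexBetween r R K)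
    (hL : IsSymmConvexBetween r R L) (hr : 0 < r) (hu : ‖u‖ = 1) (htip : R • u ∈ L)
    (hη : 0 < η) (hηR : η ≤ R) (hin : closedBall ((R - η) • u) η ⊆ L)
    (hx : x ∈ K) (hxu : IsMaxOn (inner ℝ u) K x) :
    K ∩ closedBall x (η * r / R ^ 2 * r / 2) =
      ((x - R • u) +ᵥ L) ∩ closedBall x (η * r / R ^ 2 * r / 2) := by
  have hrR : r ≤ R := hL.le_of_norm_eq_one hr.le hu
  have hR : 0 < R := hr.trans_le hrR
  set l := η * r / R ^ 2 with hl
  have hl0 : 0 < l := by positivity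
  have hl1 : l ≤ 1 := by
    rw [hl, div_le_one (by positivity), sq]
    gcongr
  have hlr : l * r ≤ η := by
    rw [hl, div_mul_eq_mul_div, div_le_iff₀ (by positivity), mul_assoc, ← sq]
    gcongr
  have hrx : r ≤ ⟪u, x⟫ := by
    have := hxu (hK.closedBall_subset (show r • u ∈ closedBall 0 r by
      simp [norm_smul, hu, abs_of_pos hr]))
    simpa [inner_smul_right, real_inner_self_eq_norm_sq, hu] using this
  refine hKL.inter_closedBall_eq hK.convex hL.neg_mem (w := (1 - l) • x)
    (by positivity) hx hxu htip
    (fun z hz ↦ inner_lt_of_norm_le hu (mem_closedBall_zero_iff.1 (hL.subset_closedBall hz)))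
    ((closedBall_subset_closedBall (half_le_self (by positivity))).trans
      (closedBall_one_sub_smul_subset hK.convex hK.closedBall_subset hx hl0 hl1)) fun z hz ↦ ?_
  have hz' : z + R • u ∈ closedBall (η • u) η := by
    refine closedBall_smul_subset_closedBall_smul hu
      (mem_closedBall_zero_iff.1 (hK.subset_closedBall hx)) hrx hr.le hl0.le hη.le hlr
      (div_mul_cancel₀ _ (by positivity)) ?_
    rw [mem_closedBall, dist_eq_norm] at hz ⊢
    convert hz using 2
    module
  rw [← neg_neg z]
  refine hL.neg_mem _ (hin ?_)
  rw [mem_closedBall, dist_eq_norm] at hz' ⊢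
  rwa [← norm_neg, show -(-z - (R - η) • u) = z + R • u - η • u by module]

/-! ### Germs of rotated copies -/

/-- At boundary points with a common outer unit normal, `K` and each of its images under linear
isometries agree, up to translation, in a ball of radius `δ`. -/
def HasUniformGerms (K : Set E) (δ : ℝ) : Prop :=
  ∀ (g : E ≃ₗᵢ[ℝ] E) ⦃u x y : E⦄, ‖u‖ = 1 → x ∈ K → IsMaxOn (inner ℝ u) K x →
    y ∈ g '' K → IsMaxOn (inner ℝ u) (g '' K) y →
    K ∩ closedBall x δ = ((x - y) +ᵥ g '' K) ∩ closedBall x δ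

lemma HasSymmetricIntersections.exists_hasUniformGerms (H : HasSymmetricIntersections K)
    (hK : IsSymmConvexBetween r R K) (hr : 0 < r) (hp : p ∈ K) (hpR : ‖p‖ = R)
    (hv : ‖v‖ = 1) (hvK : ∀ z ∈ K, ⟪v, z⟫ ≤ r) : ∃ δ > 0, HasUniformGerms K δ := by
  have hrR : r ≤ R := hK.le_of_norm_eq_one hr.le hv
  have hR : 0 < R := hr.trans_le hrR
  have hηR : r ^ 2 / (2 * R) ≤ R := by
    rw [div_le_iff₀ (by positivity)]
    nlinarith
  refine ⟨r ^ 2 / (2 * R) * r / R ^ 2 * r / 2, by positivity, fun g u x y hu hx hxu hy hyu ↦ ?_⟩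
  obtain ⟨h, hh⟩ := exists_linearIsometryEquiv_apply_eq (x := p) (y := R • u)
    (by rw [norm_smul, hu, mul_one, hpR, Real.norm_of_nonneg hR.le])
  obtain ⟨f, hf⟩ := exists_linearIsometryEquiv_apply_eq (hv.trans hu.symm)
  have htip : R • u ∈ h '' K := ⟨p, hp, hh⟩
  have hflat : ∀ z ∈ f '' K, ⟪u, z⟫ ≤ r := by
    rintro _ ⟨z, hz, rfl⟩
    rw [← hf, f.inner_map_map]
    exact hvK z hz
  have hin := (H.meetsTranslatesSymmetrically_image f h).closedBall_subset_of_smul_mem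
    (hK.image f) (hK.image h) hr hu hflat htip
  have hagree (k : E ≃ₗᵢ[ℝ] E) {z : E} (hz : z ∈ k '' K) (hzu : IsMaxOn (inner ℝ u) (k '' K) z) :=
    (H.meetsTranslatesSymmetrically_image k h).inter_closedBall_eq_of_smul_mem
      (hK.image k) (hK.image h) hr hu htip (by positivity) hηR hin hz hzu
  have hxagree := hagree (.refl ℝ E) (by simpa using hx) (by simpa using hxu)
  have hyagree := congrArg ((x - y) +ᵥ ·) (hagree g hy hyu)
  simp only [Set.vadd_set_inter, Metric.vadd_closedBall, vadd_vadd, vadd_eq_add, sub_add_cancel,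
    sub_add_sub_cancel] at hyagree
  simpa [hyagree] using hxagree

lemma HasUniformGerms.inter_closedBall_eq_of_dist_lt [CompleteSpace E]
    (hKδ : HasUniformGerms K δ) (hconv : Convex ℝ K) (hint : (interior K).Nonempty)
    (hclosed : IsClosed K) (g : E ≃ₗᵢ[ℝ] E) (hy : y ∈ frontier K) (hyx : dist y x < δ)
    (heq : K ∩ closedBall x δ = (b +ᵥ g '' K) ∩ closedBall x δ) :
    K ∩ closedBall y δ = (b +ᵥ g '' K) ∩ closedBall y δ := by
  have hyK : y ∈ K := hclosed.frontier_subset hy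
  have hyK' : y ∈ b +ᵥ g '' K := (heq.subset ⟨hyK, hyx.le⟩).1
  obtain ⟨u, hu, hmax⟩ := exists_unit_isMaxOn_inner hconv hint hy.2
  have hmax' : IsMaxOn (inner ℝ u) (b +ᵥ g '' K) y := isMaxOn_inner_of_inter_eq
    ((hconv.linear_image g.toLinearEquiv.toLinearMap).vadd b) hyK'
    (Filter.mem_of_superset (isOpen_ball.mem_nhds hyx) ball_subset_closedBall) heq hmax
  have hmax_sub : IsMaxOn (inner ℝ u) (g '' K) (y - b) := fun z hz ↦ by
    have : ⟪u, b + z⟫ ≤ ⟪u, y⟫ := hmax' (Set.vadd_mem_vadd_set hz)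
    rw [inner_add_right] at this
    rw [Set.mem_ofPred_eq, inner_sub_right]
    linarith
  have hgerm := hKδ g hu hyK hmax (mem_vadd_set_iff_sub_mem.1 hyK') hmax_sub
  rwa [sub_sub_cancel] at hgerm

lemma HasUniformGerms.frontier_subset_of_inter_closedBall_eq [CompleteSpace E]
    (hKδ : HasUniformGerms K δ) (hδ : 0 < δ) (hE : 1 < Module.rank ℝ E) (hcomp : IsCompact K)
    (hconv : Convex ℝ K) (hint : (interior K).Nonempty) (g : E ≃ₗᵢ[ℝ] E) (hx : x ∈ frontier K)
    (heq : K ∩ closedBall x δ = (b +ᵥ g '' K) ∩ closedBall x δ) :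
    frontier K ⊆ b +ᵥ g '' K := by
  let P (z : E) : Prop := K ∩ closedBall z δ = (b +ᵥ g '' K) ∩ closedBall z δ
  have hstep {y z : E} (hz : z ∈ frontier K) (hzy : dist z y < δ) (hy : P y) : P z :=
    hKδ.inter_closedBall_eq_of_dist_lt hconv hint hcomp.isClosed g hz hzy hy
  have hcontinue {y : E} (hy : y ∈ frontier K) : P x → P y := by
    refine (isPreconnected_frontier_of_convex hE hconv hint hcomp.isBounded).induction₂'
      (fun z z' ↦ P z → P z') (fun z hz ↦ ?_) (fun _ _ _ _ _ _ h h' ↦ h' ∘ h) hx hy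
    filter_upwards [mem_nhdsWithin_of_mem_nhds (ball_mem_nhds z hδ), self_mem_nhdsWithin]
      with z' hdist hz'
    exact ⟨hstep hz' hdist, hstep hz (mem_ball'.1 hdist)⟩
  intro y hy
  exact ((hcontinue hy heq).subset
    ⟨hcomp.isClosed.frontier_subset hy, mem_closedBall_self hδ.le⟩).1

/-! ### High's theorem -/

lemma IsSymmConvexBetween.eq_closedBall_of_hasUniformGerms [CompleteSpace E] {q : E}
    (hK : IsSymmConvexBetween ‖q‖ ‖p‖ K) (hE : 1 < Module.rank ℝ E) (hcomp : IsCompact K)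
    (hint : (interior K).Nonempty) (hKδ : HasUniformGerms K δ) (hδ : 0 < δ) (hp : p ∈ K)
    (hp0 : p ≠ 0) (hq : q ∈ frontier K) : K = closedBall 0 ‖p‖ := by
  obtain ⟨u, hu, hmax⟩ := exists_unit_isMaxOn_inner hK.convex hint hq.2
  have hnorm : ‖‖p‖ • u‖ = ‖p‖ := by rw [norm_smul, norm_norm, hu, mul_one]
  obtain ⟨g, hg⟩ := exists_linearIsometryEquiv_apply_eq hnorm.symm
  have hgK := (hK.image g).subset_closedBall
  have htop : IsMaxOn (inner ℝ u) (g '' K) (‖p‖ • u) := fun z hz ↦ by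
    rcases eq_or_ne z (‖p‖ • u) with rfl | hne
    · exact le_refl ⟪u, ‖p‖ • u⟫
    · exact (inner_lt_of_norm_le hu (mem_closedBall_zero_iff.1 (hgK hz)) hne).le
  have hfrontier : frontier K ⊆ (q - ‖p‖ • u) +ᵥ g '' K :=
    hKδ.frontier_subset_of_inter_closedBall_eq hδ hE hcomp hK.convex hint g hq
      (hKδ g hu (hcomp.isClosed.frontier_subset hq) hmax ⟨p, hp, hg⟩ htop)
  have hdist {z : E} (hz : z ∈ frontier K) : ‖z - (q - ‖p‖ • u)‖ ≤ ‖p‖ :=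
    mem_closedBall_zero_iff.1 (hgK (mem_vadd_set_iff_sub_mem.1 (hfrontier hz)))
  have hsub := hdist (mem_frontier_of_subset_closedBall hK.subset_closedBall hp hp0)
  have hadd := hdist (mem_frontier_of_subset_closedBall (by simpa using hK.subset_closedBall)
    (hK.neg_mem p hp) (neg_ne_zero.2 hp0))
  rw [← norm_neg, neg_sub, sub_neg_eq_add, add_comm] at hadd
  have hq_eq : ‖q‖ = ‖p‖ := by
    rw [sub_eq_zero.1 (eq_zero_of_norm_add_le_of_norm_sub_le hadd hsub), hnorm]
  exact hK.subset_closedBall.antisymm (hq_eq ▸ hK.closedBall_subset)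

lemma HasSymmetricIntersections.exists_eq_closedBall_zero [CompleteSpace E]
    (H : HasSymmetricIntersections K) (hE : 1 < Module.rank ℝ E) (hcomp : IsCompact K)
    (hconv : Convex ℝ K) (hint : (interior K).Nonempty) (hneg : ∀ z ∈ K, -z ∈ K) :
    ∃ R > 0, K = closedBall 0 R := by
  have : Nontrivial E := (rank_pos_iff_nontrivial (R := ℝ)).1 (zero_lt_one.trans hE)
  have h0 : 0 ∈ interior K := zero_mem_interior_of_neg_mem hconv hneg hint
  obtain ⟨q, hq, hq_dist⟩ := hcomp.exists_mem_frontier_infDist_compl_eq_dist (interior_subset h0)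
  obtain ⟨p, hp, hpmax⟩ := hcomp.exists_isMaxOn ⟨0, interior_subset h0⟩ continuous_norm.continuousOn
  have hK : IsSymmConvexBetween ‖q‖ ‖p‖ K :=
    { convex := hconv
      neg_mem := hneg
      closedBall_subset := by
        rw [← dist_zero_left, ← hq_dist]
        exact (closedBall_infDist_compl_subset_closure (interior_subset h0)).trans
          hcomp.isClosed.closure_subset
      subset_closedBall := fun z hz ↦ mem_closedBall_zero_iff.2 (hpmax hz) }
  have hq0 : 0 < ‖q‖ := norm_pos_iff.2 fun heq ↦ hq.2 (heq ▸ h0)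
  obtain ⟨u, hu, hmax⟩ := exists_unit_isMaxOn_inner hconv hint hq.2
  have hp0 : 0 < ‖p‖ := hq0.trans_le (hK.le_of_norm_eq_one hq0.le hu)
  have huq : ⟪u, q⟫ ≤ ‖q‖ := by simpa [hu] using real_inner_le_norm u q
  obtain ⟨δ, hδ, hKδ⟩ := H.exists_hasUniformGerms hK hq0 hp rfl hu
    fun z hz ↦ le_trans (hmax hz) huq
  exact ⟨‖p‖, hp0,
    hK.eq_closedBall_of_hasUniformGerms hE hcomp hint hKδ hδ hp (norm_pos_iff.1 hp0) hq⟩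

theorem stmt_0_general (hE : 1 < Module.rank ℝ E) (hcomp : IsCompact K) (hconv : Convex ℝ K)
    (hint : (interior K).Nonempty) (H : HasSymmetricIntersections K) :
    ∃ (c : E) (r : ℝ), 0 < r ∧ K = closedBall c r := by
  obtain ⟨a, ha⟩ := hint
  have : LocallyCompactSpace E :=
    hcomp.locallyCompactSpace_of_mem_nhds_of_addGroup (mem_interior_iff_mem_nhds.1 ha)
  have : ProperSpace E := .of_locallyCompactSpace ℝ
  obtain ⟨c, hc⟩ := (H.isPointSymmetric ⟨a, ha⟩).exists_sub_mem
  have hneg : ∀ z ∈ -c +ᵥ K, -z ∈ -c +ᵥ K := fun z hz ↦ by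
    rw [mem_vadd_set_iff_sub_mem] at hz ⊢
    convert hc _ hz using 1
    module
  obtain ⟨r, hr, hball⟩ := (H.vadd (-c)).exists_eq_closedBall_zero hE (hcomp.vadd (-c))
    (hconv.vadd (-c)) (by rw [interior_vadd]; exact ⟨_, Set.vadd_mem_vadd_set ha⟩) hneg
  rw [neg_vadd_eq_iff, Metric.vadd_closedBall, vadd_eq_add, add_zero] at hball
  exact ⟨c, r, hr, hball⟩

end InnerProductSpace

/-- High's theorem: if all intersections of two congruent copies of a planar convex body
having interior points are centrally symmetric, then the body is a closed disk. -/
theorem stmt_0 (K : Set (EuclideanSpace ℝ (Fin 2)))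
    (hKc : IsCompact K) (hKconv : Convex ℝ K) (hKint : (interior K).Nonempty)
    (h : ∀ φ ψ : EuclideanSpace ℝ (Fin 2) ≃ᵢ EuclideanSpace ℝ (Fin 2),
      (interior ((φ '' K) ∩ (ψ '' K))).Nonempty →
      CentrallySymmetric ((φ '' K) ∩ (ψ '' K))) :
    ∃ (c : EuclideanSpace ℝ (Fin 2)) (r : ℝ), 0 < r ∧ K = closedBall c r := by
  refine stmt_0_general ?_ hKc hKconv hKint h
  rw [rank_eq_card_basis (EuclideanSpace.basisFun (Fin 2) ℝ).toBasis]
  simp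
end

section
/- Let K, L be convex bodies in ℝ² such that for all rigid motions φ, ψ of ℝ², whenever (φ K) ∩ (ψ L) has nonempty interior, this intersection is centrally symmetric. Then K and L are closed disks of the same radius. -/
open Metric

/-!
Move the bodies so that they touch a hyperplane `f = 0` from above in the single point `0`. If `A`
and `B` are in this position, then `A ∩ (v - B)` has `0` and `v` as its lowest and highest points,
so its symmetry can only be `x ↦ v - x`; this forces `A` and `B` to agree near `0`. Since it also
applies to slightly rotated copies of `B`, the common germ has no hyperplane of support at `0` other
than `f = 0`. Conversely, if this germ is smooth and both bodies have only one highest point, then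
`A = B`.

Placing a diameter of each body above the apex shows in this way that `K` and `L` are congruent to
one body `B`, which is smooth at `0` and symmetric. For every point `z`, the body `B` can also be
placed with a point farthest from `z` at the apex and with `z` above it. The result is again `B`, so
this motion fixes the centre of `B`. Taking for `z` the antipode of a point `y` of the sphere over
the diameter of `B`, the farthest point has to be `y`. Hence `B` contains that sphere.
-/

section Development

open Set Filter Topology Module InnerProductSpace

section Definitions

/-- Invariance of `S` under a point reflection `x ↦ c - x`; note that `c` is twice the centre. -/
def PointSymmetric {E : Type*} [AddCommGroup E] (S : Set E) : Prop :=
  ∃ c : E, ∀ x ∈ S, c - x ∈ S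

variable {E : Type*} [NormedAddCommGroup E]

/-- Every intersection with nonempty interior of `A` with a translate of `-B` is point symmetric.
This is all that the comparison of `A` and `B` near a common boundary point needs. -/
def ReflectedIntersectionsSymmetric (A B : Set E) : Prop :=
  ∀ v : E, (interior (A ∩ (v - ·) ⁻¹' B)).Nonempty → PointSymmetric (A ∩ (v - ·) ⁻¹' B)

/-- Every intersection with nonempty interior of a congruent copy of `A` with a congruent copy
of `B` is point symmetric. -/
def CongruentIntersectionsSymmetric (A B : Set E) : Prop :=
  ∀ φ ψ : E ≃ᵢ E, (interior (φ '' A ∩ ψ '' B)).Nonempty → PointSymmetric (φ '' A ∩ ψ '' B)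

variable [NormedSpace ℝ E]

/-- Convex bodies, as sets: compact convex sets with nonempty interior. -/
structure IsConvexBody (A : Set E) : Prop where
  convex : Convex ℝ A
  isCompact : IsCompact A
  nonempty_interior : (interior A).Nonempty

/-- A convex body that touches the hyperplane `f = 0` from above, at the origin only. -/
structure IsApexBody (f : StrongDual ℝ E) (A : Set E) : Prop extends IsConvexBody A where
  zero_mem : 0 ∈ A
  pos : ∀ a ∈ A, a ≠ 0 → 0 < f a

/-- The set `A` fills out the half-space `0 < f` infinitesimally at the origin. For a convex body
with apex at the origin, this says that `f = 0` is the only supporting hyperplane there. -/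
def SmoothAtZero (f : StrongDual ℝ E) (A : Set E) : Prop :=
  ∀ d : E, 0 < f d → ∀ᶠ t : ℝ in 𝓝[>] 0, t • d ∈ A

end Definitions

lemma interior_image_isometryEquiv {X Y : Type*} [PseudoEMetricSpace X] [PseudoEMetricSpace Y]
    (φ : X ≃ᵢ Y) (A : Set X) : interior (φ '' A) = φ '' interior A :=
  (φ.toHomeomorph.image_interior A).symm

lemma image_isometryEquiv_refl {X : Type*} [PseudoEMetricSpace X] (A : Set X) :
    IsometryEquiv.refl X '' A = A :=
  image_id A

lemma dist_pos_of_isMaxOn {X : Type*} [MetricSpace X] {s : Set X} (hs : s.Nontrivial) {x z : X}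
    (hmax : IsMaxOn (dist z) s x) : 0 < dist z x := by
  obtain ⟨p, hp, q, hq, hpq⟩ := hs
  have hzp : dist z p ≤ dist z x := hmax hp
  have hzq : dist z q ≤ dist z x := hmax hq
  linarith [dist_pos.2 hpq, dist_triangle_left p q z]

section NormedAddCommGroup

variable {E : Type*} [NormedAddCommGroup E] {A B : Set E}

lemma ReflectedIntersectionsSymmetric.symm (h : ReflectedIntersectionsSymmetric A B) :
    ReflectedIntersectionsSymmetric B A := by
  intro v hi
  have hrefl : B ∩ (v - ·) ⁻¹' A = IsometryEquiv.subLeft v '' (A ∩ (v - ·) ⁻¹' B) := by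
    ext x
    rw [← IsometryEquiv.preimage_symm]
    simp [and_comm, sub_eq_neg_add]
  rw [hrefl, interior_image_isometryEquiv, image_nonempty] at hi
  obtain ⟨c, hc⟩ := h v hi
  refine ⟨v + v - c, ?_⟩
  rw [hrefl]
  rintro _ ⟨x, hx, rfl⟩
  exact ⟨c - x, hc x hx, by simp only [IsometryEquiv.subLeft_apply]; abel⟩

namespace CongruentIntersectionsSymmetric

lemma image (h : CongruentIntersectionsSymmetric A B) (φ ψ : E ≃ᵢ E) :
    CongruentIntersectionsSymmetric (φ '' A) (ψ '' B) := by
  intro φ' ψ' hi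
  rw [← image_comp, ← image_comp] at hi ⊢
  exact h (φ.trans φ') (ψ.trans ψ') hi

lemma reflectedIntersections (h : CongruentIntersectionsSymmetric A B) :
    ReflectedIntersectionsSymmetric A B := by
  intro v hi
  have hpre : (v - ·) ⁻¹' B = IsometryEquiv.subLeft v '' B := by
    rw [← IsometryEquiv.preimage_symm]
    ext x
    simp [sub_eq_neg_add]
  rw [hpre, ← image_isometryEquiv_refl A] at hi ⊢
  exact h _ _ hi

end CongruentIntersectionsSymmetric

end NormedAddCommGroup

section NormedSpace

variable {E : Type*} [NormedAddCommGroup E] [NormedSpace ℝ E] {f : StrongDual ℝ E} {A B : Set E}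

lemma eventually_add_smul_mem_interior {a : E} (ha : a ∈ interior A) (d : E) :
    ∀ᶠ t : ℝ in 𝓝[>] 0, a + t • d ∈ interior A := by
  have hcont : Continuous fun t : ℝ ↦ a + t • d := by fun_prop
  exact ((hcont.tendsto' 0 a (by simp)).mono_left nhdsWithin_le_nhds).eventually
    (isOpen_interior.mem_nhds ha)

lemma dist_smul_sub_right (D : ℝ) (u x : E) :
    dist x (D • u - x) = 2 * dist x ((D / 2) • u) := by
  rw [dist_eq_norm, dist_eq_norm, show x - (D • u - x) = (2 : ℝ) • (x - (D / 2) • u) by module,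
    norm_smul, Real.norm_two]

lemma tendsto_smul_nhdsGT_zero (d : E) : Tendsto (fun t : ℝ ↦ t • d) (𝓝[>] 0) (𝓝 0) :=
  ((continuous_id.smul continuous_const).tendsto' 0 0 (zero_smul ℝ d)).mono_left
    nhdsWithin_le_nhds

lemma isometryEquiv_map_sub_add_map (φ : E ≃ᵢ E) (x y : E) : φ (x - y) + φ y = φ x + φ 0 := by
  have h := φ.toRealLinearIsometryEquiv.map_sub x y
  simp only [IsometryEquiv.toRealLinearIsometryEquiv_apply] at h
  rw [sub_eq_iff_eq_add.1 h]
  abel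

lemma nonempty_interior_inter_of_add_smul_mem (hA : Convex ℝ A) (hB : Convex ℝ B) {a d : E}
    {D r : ℝ} (hD : 0 < D) (hr : 0 ≤ r) (h₀ : 0 ∈ B) (hd : D • d ∈ A) (ha : a ∈ interior A)
    (har : a + r • d ∈ interior B) : (interior (A ∩ B)).Nonempty := by
  have hpos : 0 < D + r := by positivity
  have hmem : D / (D + r) ∈ Ioc (0 : ℝ) 1 := ⟨by positivity, (div_le_one hpos).2 (by linarith)⟩
  rw [interior_inter]
  refine ⟨(D / (D + r)) • (a + r • d), ?_, ?_⟩
  · convert hA.add_smul_sub_mem_interior hd ha hmem using 1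
    match_scalars <;> field_simp
    ring
  · simpa using hB.add_smul_sub_mem_interior h₀ har hmem

lemma exists_mem_interior_notMem_span_singleton (hE : 1 < finrank ℝ E)
    (hA : (interior A).Nonempty) (u : E) : ∃ a ∈ interior A, a ∉ ℝ ∙ u := by
  by_contra! hsub
  have htop : ℝ ∙ u = ⊤ := (ℝ ∙ u).eq_top_of_nonempty_interior'
    (hA.mono (interior_maximal hsub isOpen_interior))
  have hle : finrank ℝ (ℝ ∙ u) ≤ 1 := by simpa using finrank_span_le_card (R := ℝ) {u}
  rw [htop, finrank_top] at hle
  omega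

lemma exists_mem_interior_apply_eq (hA : Convex ℝ A) {a w : E} (ha : a ∈ interior A)
    (hw : w ∈ A) {r : ℝ} (har : f a ≤ r) (hrw : r < f w) : ∃ z ∈ interior A, f z = r := by
  have hd : 0 < f w - f a := by linarith
  refine ⟨w + ((f w - r) / (f w - f a)) • (a - w), hA.add_smul_sub_mem_interior hw ha
    ⟨div_pos (by linarith) hd, (div_le_one hd).2 (by linarith)⟩, ?_⟩
  rw [map_add, map_smul, map_sub, smul_eq_mul]
  field_simp
  ring

lemma exists_ne_zero_apply_eq_zero (hE : 1 < finrank ℝ E) (f : StrongDual ℝ E) :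
    ∃ e : E, e ≠ 0 ∧ f e = 0 := by
  have := FiniteDimensional.of_finrank_pos (zero_lt_one.trans hE)
  have hker : LinearMap.ker (f : E →ₗ[ℝ] ℝ) ≠ ⊥ :=
    LinearMap.ker_ne_bot_of_finrank_lt (by simpa using hE)
  obtain ⟨e, he, hne⟩ := Submodule.exists_mem_ne_zero_of_ne_bot hker
  exact ⟨e, hne, he⟩

lemma IsConvexBody.subset_closure_interior (hA : IsConvexBody A) : A ⊆ closure (interior A) := by
  rw [hA.convex.closure_interior_eq_closure_of_nonempty_interior hA.nonempty_interior]
  exact subset_closure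

lemma IsConvexBody.nontrivial [Nontrivial E] (hA : IsConvexBody A) : A.Nontrivial := by
  obtain ⟨a, ha⟩ := hA.nonempty_interior
  obtain ⟨e, he⟩ := exists_ne (0 : E)
  obtain ⟨t, hta, ht⟩ :=
    ((eventually_add_smul_mem_interior ha e).and self_mem_nhdsWithin).exists
  exact ⟨a + t • e, interior_subset hta, a, interior_subset ha, by simp [ht.ne', he]⟩

lemma IsConvexBody.inter (hA : IsConvexBody A) (hB : IsConvexBody B)
    (hi : (interior (A ∩ B)).Nonempty) : IsConvexBody (A ∩ B) :=
  ⟨hA.convex.inter hB.convex, hA.isCompact.inter hB.isCompact, hi⟩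

lemma IsConvexBody.image (hA : IsConvexBody A) (φ : E ≃ᵢ E) : IsConvexBody (φ '' A) where
  convex := by
    simpa using hA.convex.affine_image (φ.toRealAffineIsometryEquiv.toAffineEquiv : E →ᵃ[ℝ] E)
  isCompact := hA.isCompact.image φ.continuous
  nonempty_interior := by
    rw [interior_image_isometryEquiv]
    exact hA.nonempty_interior.image φ

/-! ### Apex bodies -/

namespace IsApexBody

lemma nonneg (hA : IsApexBody f A) {a : E} (ha : a ∈ A) : 0 ≤ f a := by
  obtain rfl | hne := eq_or_ne a 0
  · simp
  · exact (hA.pos a ha hne).le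

lemma smul_mem (hA : IsApexBody f A) {a : E} (ha : a ∈ A) {t : ℝ} (ht : t ∈ Icc (0 : ℝ) 1) :
    t • a ∈ A :=
  hA.convex.smul_mem_of_zero_mem hA.zero_mem ha ht

lemma smul_mem_interior (hA : IsApexBody f A) {a : E} (ha : a ∈ interior A) {t : ℝ}
    (ht : t ∈ Ioc (0 : ℝ) 1) : t • a ∈ interior A := by
  simpa using hA.convex.add_smul_sub_mem_interior hA.zero_mem ha ht

lemma pos_of_mem_interior [Nontrivial E] (hA : IsApexBody f A) {a : E} (ha : a ∈ interior A) :
    0 < f a := by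
  refine hA.pos a (interior_subset ha) ?_
  rintro rfl
  obtain ⟨e, he⟩ := exists_ne (0 : E)
  obtain ⟨t, ⟨hte, hte'⟩, ht⟩ := (((eventually_add_smul_mem_interior ha e).and
    (eventually_add_smul_mem_interior ha (-e))).and self_mem_nhdsWithin).exists
  have hpos := hA.pos _ (interior_subset hte) (by simp [ht.ne', he])
  have hnonneg := hA.nonneg (interior_subset hte')
  simp only [zero_add, smul_neg, map_neg] at hpos hnonneg
  linarith

lemma inter (hA : IsApexBody f A) (hB : IsApexBody f B) (hi : (interior (A ∩ B)).Nonempty) :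
    IsApexBody f (A ∩ B) :=
  ⟨hA.toIsConvexBody.inter hB.toIsConvexBody hi, ⟨hA.zero_mem, hB.zero_mem⟩,
    fun a ha ↦ hA.pos a ha.1⟩

lemma toExposed_eq_singleton (hA : IsApexBody f A) {c : E} (hc : ∀ x ∈ A, c - x ∈ A) :
    f.toExposed A = {c} := by
  have hcA : c ∈ A := by simpa using hc 0 hA.zero_mem
  refine eq_singleton_iff_unique_mem.2 ⟨⟨hcA, fun a ha ↦ ?_⟩, fun z ⟨hz, hmax⟩ ↦ ?_⟩
  · simpa using hA.nonneg (hc a ha)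
  · by_contra hne
    have hpos := hA.pos (c - z) (hc z hz) (sub_ne_zero.2 (Ne.symm hne))
    rw [map_sub] at hpos
    linarith [hmax c hcA]

end IsApexBody

/-! ### Comparing two apex bodies at their common apex -/

namespace SmoothAtZero

lemma inter_of_eventuallyEq (hB : SmoothAtZero f B) (h : A =ᶠ[𝓝 0] B) :
    SmoothAtZero f (A ∩ B) := by
  intro d hd
  filter_upwards [hB d hd, (tendsto_smul_nhdsGT_zero d).eventually h.mem_iff] with t htB hiff
  exact ⟨hiff.2 htB, htB⟩

lemma nonempty_interior_inter [Nontrivial E] (hs : SmoothAtZero f B) (hA : IsApexBody f A)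
    (hB : IsConvexBody B) : (interior (A ∩ B)).Nonempty := by
  obtain ⟨a, ha⟩ := hA.nonempty_interior
  obtain ⟨t, htB, ht⟩ :=
    ((hs a (hA.pos_of_mem_interior ha)).and (Ioc_mem_nhdsGT zero_lt_one)).exists
  rw [interior_inter]
  exact mem_closure_iff.1 (hB.subset_closure_interior htB) _ isOpen_interior
    (hA.smul_mem_interior ha ht)

end SmoothAtZero

namespace ReflectedIntersectionsSymmetric

-- The intersection of `A` with `v - B` has `0` as its only lowest and `v` as its only highest
-- point, so its symmetry exchanges the two.
lemma mem_of_sub_mem (hA : IsApexBody f A) (hB : IsApexBody f B)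
    (h : ReflectedIntersectionsSymmetric A B) {v w : E} (hvA : v ∈ A) (hvB : v ∈ B)
    (hi : (interior (A ∩ (v - ·) ⁻¹' B)).Nonempty) (hwA : w ∈ A) (hvw : v - w ∈ B) : w ∈ B := by
  obtain ⟨c, hc⟩ := h v hi
  have hc₀ : c - 0 ∈ A ∩ (v - ·) ⁻¹' B := hc 0 ⟨hA.zero_mem, by simpa using hvB⟩
  have hcv : c - v ∈ A ∩ (v - ·) ⁻¹' B := hc v ⟨hvA, by simpa using hB.zero_mem⟩
  have hvc : v = c := by
    by_contra hne
    have hpos := hB.pos (v - c) (by simpa using hc₀.2) (sub_ne_zero.2 hne)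
    have hnonneg := hA.nonneg hcv.1
    rw [map_sub] at hpos hnonneg
    linarith
  subst hvc
  simpa using (hc w ⟨hwA, hvw⟩).2

lemma mem_of_add_mem_interior (hA : IsApexBody f A) (hB : IsApexBody f B)
    (h : ReflectedIntersectionsSymmetric A B) {v w : E} (hv : v ∈ B)
    (hvw : v + w ∈ interior (A ∩ B)) (hw : w ∈ A) : w ∈ B := by
  obtain ⟨hvwA, hvwB⟩ := interior_subset hvw
  refine h.mem_of_sub_mem hA hB hvwA hvwB ?_ hw (by simpa using hv)
  obtain ⟨a, ha⟩ := hA.nonempty_interior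
  obtain ⟨t, htB, ht⟩ := ((eventually_add_smul_mem_interior
    (interior_mono inter_subset_right hvw) (-a)).and (Ioc_mem_nhdsGT zero_lt_one)).exists
  refine ⟨t • a, ?_⟩
  rw [interior_inter]
  refine ⟨hA.smul_mem_interior ha ht,
    preimage_interior_subset_interior_preimage (by fun_prop) ?_⟩
  simpa [sub_eq_add_neg] using htB

lemma eventuallyEq_nhds_zero (hA : IsApexBody f A) (hB : IsApexBody f B)
    (h : ReflectedIntersectionsSymmetric A B) (hi : (interior (A ∩ B)).Nonempty) :
    A =ᶠ[𝓝 0] B := by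
  obtain ⟨v, hv⟩ := hi
  obtain ⟨hvA, hvB⟩ := interior_subset hv
  have hnear : ∀ᶠ w in 𝓝 (0 : E), v + w ∈ interior (A ∩ B) :=
    (continuous_const_add v).tendsto' 0 v (add_zero v) |>.eventually
      (isOpen_interior.mem_nhds hv)
  filter_upwards [hnear] with w hw
  exact propext ⟨h.mem_of_add_mem_interior hA hB hvB hw,
    h.symm.mem_of_add_mem_interior hB hA hvA (by rwa [inter_comm])⟩

-- The last multiple `s • w` in `B` lies in `A ∩ B`. If `c` were strictly higher, smoothness
-- would put a small multiple `v` of `c - s • w` into `A ∩ B`, and comparing `w' = (s + t) • w`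
-- with `v + w'` would put `w'` into `B` as well.
lemma apply_lt_of_mem_diff (hA : IsApexBody f A) (hB : IsApexBody f B)
    (h : ReflectedIntersectionsSymmetric A B) (hi : (interior (A ∩ B)).Nonempty)
    (hs : SmoothAtZero f (A ∩ B)) {c w : E} (hc : c ∈ A ∩ B) (hwA : w ∈ A) (hwB : w ∉ B) :
    f c < f w := by
  have hAB := hA.inter hB hi
  obtain ⟨s, ⟨⟨hs₀, hs₁⟩, hsB⟩, hmax⟩ : ∃ s ∈ Icc (0 : ℝ) 1 ∩ (· • w) ⁻¹' B,
      IsMaxOn id (Icc (0 : ℝ) 1 ∩ (· • w) ⁻¹' B) s :=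
    (isCompact_Icc.inter_right (hB.isCompact.isClosed.preimage (by fun_prop))).exists_isMaxOn
      ⟨0, by simp [hB.zero_mem]⟩ continuousOn_id
  have hs_lt : s < 1 := hs₁.lt_of_ne (by rintro rfl; exact hwB (by simpa using hsB))
  have hsAB : s • w ∈ A ∩ B := ⟨hA.smul_mem hwA ⟨hs₀, hs₁⟩, hsB⟩
  have hint : ∀ x ∈ interior (A ∩ B), f x ≤ f (s • w) := by
    intro x hx
    by_contra! hlt
    obtain ⟨k, hk, hk₀₁⟩ := ((hs (x - s • w) (by rw [map_sub]; linarith)).and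
      (Ioc_mem_nhdsGT zero_lt_one)).exists
    have hv : k • (x - s • w) + s • w ∈ interior (A ∩ B) := by
      rw [add_comm]
      exact hAB.convex.add_smul_sub_mem_interior hsAB hx hk₀₁
    obtain ⟨t, ht, ht₀, ht₁⟩ := ((eventually_add_smul_mem_interior hv w).and
      (Ioc_mem_nhdsGT (sub_pos.2 hs_lt))).exists
    have hst : s + t ∈ Icc (0 : ℝ) 1 := ⟨by linarith, by linarith⟩
    have hmem : (s + t) • w ∈ B := h.mem_of_add_mem_interior hA hB hk.2
      (by rwa [add_smul, ← add_assoc]) (hA.smul_mem hwA hst)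
    have : s + t ≤ s := hmax ⟨hst, hmem⟩
    linarith
  have hle : f c ≤ f (s • w) := closure_minimal hint
    (isClosed_le f.continuous continuous_const) (hAB.subset_closure_interior hc)
  have hw : 0 < f w := hA.pos w hwA (by rintro rfl; exact hwB hB.zero_mem)
  rw [map_smul, smul_eq_mul] at hle
  nlinarith

-- If `A ⊄ B`, then the highest level of `A ∩ B` runs through the interior of `A`, so `B` must
-- stop there and its top face contains a segment.
lemma subset_of_subsingleton_toExposed (hE : 1 < finrank ℝ E) (hA : IsApexBody f A)
    (hB : IsApexBody f B) (h : ReflectedIntersectionsSymmetric A B)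
    (hi : (interior (A ∩ B)).Nonempty) (hs : SmoothAtZero f (A ∩ B))
    (htop : (f.toExposed B).Subsingleton) : A ⊆ B := by
  by_contra hAB
  obtain ⟨w, hwA, hwB⟩ := not_subset.1 hAB
  obtain ⟨m, hm, hmax⟩ := (hA.isCompact.inter hB.isCompact).exists_isMaxOn
    (hi.mono interior_subset) f.continuous.continuousOn
  obtain ⟨a, ha⟩ := hi
  obtain ⟨z, hz, hzm⟩ := exists_mem_interior_apply_eq hA.convex
    (interior_mono inter_subset_left ha) hwA (hmax (interior_subset ha))
    (h.apply_lt_of_mem_diff hA hB ⟨a, ha⟩ hs hm hwA hwB)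
  have hlevel : ∀ x ∈ A, f x = f m → x ∈ B := fun x hxA hx ↦ by
    by_contra hxB
    exact (h.apply_lt_of_mem_diff hA hB ⟨a, ha⟩ hs hm hxA hxB).ne' hx
  have hzB := hlevel z (interior_subset hz) hzm
  have hBle : ∀ b ∈ B, f b ≤ f m := by
    intro b hb
    obtain ⟨t, htA, ht⟩ := ((eventually_add_smul_mem_interior hz (b - z)).and
      (Ioc_mem_nhdsGT zero_lt_one)).exists
    have htB : z + t • (b - z) ∈ B := hB.convex.add_smul_sub_mem hzB hb (Ioc_subset_Icc_self ht)
    have hle : f (z + t • (b - z)) ≤ f m := hmax ⟨interior_subset htA, htB⟩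
    rw [map_add, map_smul, map_sub, smul_eq_mul, hzm] at hle
    nlinarith [ht.1]
  obtain ⟨e, he, hfe⟩ := exists_ne_zero_apply_eq_zero hE f
  obtain ⟨t, htA, ht⟩ := ((eventually_add_smul_mem_interior hz e).and self_mem_nhdsWithin).exists
  have hte : f (z + t • e) = f m := by simp [hfe, hzm]
  have heq : z + t • e = z := htop
    ⟨hlevel _ (interior_subset htA) hte, fun b hb ↦ hte ▸ hBle b hb⟩
    ⟨hzB, fun b hb ↦ hzm ▸ hBle b hb⟩
  exact smul_ne_zero ht.ne' he (by simpa using heq)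

lemma eq_of_smoothAtZero (hE : 1 < finrank ℝ E) (hA : IsApexBody f A) (hB : IsApexBody f B)
    (h : ReflectedIntersectionsSymmetric A B) (hs : SmoothAtZero f B)
    (hAtop : (f.toExposed A).Subsingleton) (hBtop : (f.toExposed B).Subsingleton) : A = B := by
  have := nontrivial_of_finrank_pos (zero_lt_one.trans hE)
  have hi := hs.nonempty_interior_inter hA hB.toIsConvexBody
  have hsAB := hs.inter_of_eventuallyEq (h.eventuallyEq_nhds_zero hA hB hi)
  refine (h.subset_of_subsingleton_toExposed hE hA hB hi hsAB hBtop).antisymm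
    (h.symm.subset_of_subsingleton_toExposed hE hB hA ?_ ?_ hAtop) <;> rwa [inter_comm]

end ReflectedIntersectionsSymmetric

/-! ### Smoothness at the apex -/

lemma IsApexBody.exists_forall_smul_notMem_of_not_smoothAtZero (hB : IsApexBody f B)
    (hs : ¬ SmoothAtZero f B) : ∃ d : E, 0 < f d ∧ ∀ τ : ℝ, 0 < τ → τ • d ∉ B := by
  simp only [SmoothAtZero, not_forall] at hs
  obtain ⟨d, hd, hdB⟩ := hs
  refine ⟨d, hd, fun τ hτ hτB ↦ hdB ?_⟩
  filter_upwards [Ioc_mem_nhdsGT hτ] with t ht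
  simpa [smul_smul, hτ.ne'] using hB.smul_mem hτB (t := t / τ)
    ⟨div_nonneg ht.1.le hτ.le, (div_le_one hτ).2 ht.2⟩

-- `g` separates the interior of `B` from a ray that leaves `B` at the apex.
lemma IsApexBody.exists_dual_nonpos_of_not_smoothAtZero [Nontrivial E] (hB : IsApexBody f B)
    (hs : ¬ SmoothAtZero f B) :
    ∃ g : StrongDual ℝ E, (∀ b ∈ B, g b ≤ 0) ∧ ∀ r : ℝ, g ≠ r • f := by
  obtain ⟨d, hd, hray⟩ := hB.exists_forall_smul_notMem_of_not_smoothAtZero hs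
  have hdisj : Disjoint (interior B) ((· • d) '' Ioi (0 : ℝ)) := by
    rw [disjoint_right]
    rintro _ ⟨τ, hτ, rfl⟩ hτB
    exact hray τ hτ (interior_subset hτB)
  obtain ⟨g, s, hgB, hgd⟩ := geometric_hahn_banach_open hB.convex.interior isOpen_interior
    ((convex_Ioi (0 : ℝ)).linear_image (LinearMap.toSpanSingleton ℝ E d)) hdisj
  have hgB' : ∀ b ∈ B, g b ≤ s := fun b hb ↦
    closure_minimal (fun a ha ↦ (hgB a ha).le) (isClosed_le g.continuous continuous_const)
      (hB.subset_closure_interior hb)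
  have hgd' : ∀ τ : ℝ, 0 < τ → s ≤ τ * g d := fun τ hτ ↦ by
    simpa using hgd (τ • d) ⟨τ, hτ, rfl⟩
  have hs₀ : 0 ≤ s := by simpa using hgB' 0 hB.zero_mem
  have hgd₀ : 0 ≤ g d := by linarith [hgd' 1 one_pos]
  have hs_nonpos : s ≤ 0 := by
    have hlim : Tendsto (fun τ : ℝ ↦ τ * g d) (𝓝[>] 0) (𝓝 0) := by
      simpa using tendsto_smul_nhdsGT_zero (g d)
    exact ge_of_tendsto hlim (eventually_mem_nhdsWithin.mono hgd')
  refine ⟨g, fun b hb ↦ (hgB' b hb).trans hs_nonpos, ?_⟩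
  rintro r rfl
  obtain ⟨a, ha⟩ := hB.nonempty_interior
  have hfa := hB.pos_of_mem_interior ha
  have hga := hgB a ha
  simp only [smul_apply, smul_eq_mul] at hga hgd₀
  nlinarith

-- If it were, then a minimiser `v` of `f` on a small sphere of `B` would have both `R v` and
-- `R⁻¹ v` in `B`, at an average height of `c * f v < f v`.
lemma IsApexBody.not_eventuallyEq_image [Nontrivial E] (hB : IsApexBody f B) {R : E ≃ₗᵢ[ℝ] E}
    {c : ℝ} (hc : c < 1) (hR : ∀ x, f (R x) + f (R.symm x) = 2 * c * f x) :
    ¬ B =ᶠ[𝓝 0] R '' B := by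
  intro h
  obtain ⟨δ, hδ, hball⟩ := Metric.eventually_nhds_iff_ball.1 h.mem_iff
  obtain ⟨a, ha, ha₀⟩ := hB.nontrivial.exists_ne 0
  obtain ⟨t, htδ, ht⟩ := (((tendsto_smul_nhdsGT_zero a).eventually (ball_mem_nhds 0 hδ)).and
    (Ioc_mem_nhdsGT zero_lt_one)).exists
  obtain ⟨v, ⟨hvB, hvt⟩, hmin⟩ := (hB.isCompact.inter_right
    (isClosed_sphere (x := 0) (ε := ‖t • a‖))).exists_isMinOn
    ⟨t • a, hB.smul_mem ha (Ioc_subset_Icc_self ht), by simp⟩ f.continuous.continuousOn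
  have hRball : ∀ x : E, ‖x‖ = ‖v‖ → x ∈ ball 0 δ := fun x hx ↦ by
    rw [mem_sphere_zero_iff_norm] at hvt
    simpa [hx, hvt] using htδ
  have hv₀ : v ≠ 0 := by
    rintro rfl
    rw [mem_sphere_zero_iff_norm, norm_zero, eq_comm, norm_eq_zero] at hvt
    exact smul_ne_zero ht.1.ne' ha₀ hvt
  have hRv : R v ∈ B := (hball _ (hRball _ (R.norm_map v))).2 (mem_image_of_mem R hvB)
  have hRv' : R.symm v ∈ B := by
    obtain ⟨b, hb, hbv⟩ := (hball v (hRball v rfl)).1 hvB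
    rwa [← hbv, R.symm_apply_apply]
  have hle : f v ≤ f (R v) := hmin ⟨hRv, by simpa using hvt⟩
  have hle' : f v ≤ f (R.symm v) := hmin ⟨hRv', by simpa using hvt⟩
  nlinarith [hR v, hB.pos v hvB hv₀]

lemma CongruentIntersectionsSymmetric.map_add_map_zero_eq (hE : 1 < finrank ℝ E) {c : E}
    (hB : IsApexBody f B) (hc : ∀ x ∈ B, c - x ∈ B) (h : CongruentIntersectionsSymmetric B B)
    (hs : SmoothAtZero f B) {φ : E ≃ᵢ E} (hφ : IsApexBody f (φ '' B)) :
    φ c + φ 0 = c := by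
  have htop := hB.toExposed_eq_singleton hc
  have htopφ : f.toExposed (φ '' B) = {φ c + φ 0} := by
    refine hφ.toExposed_eq_singleton ?_
    rintro _ ⟨x, hx, rfl⟩
    exact ⟨c - x, hc x hx, eq_sub_of_add_eq (isometryEquiv_map_sub_add_map φ c x)⟩
  have hφB := h.image φ (IsometryEquiv.refl E)
  rw [image_isometryEquiv_refl] at hφB
  have heq : φ '' B = B := hφB.reflectedIntersections.eq_of_smoothAtZero hE hφ hB hs
    (htopφ ▸ subsingleton_singleton) (htop ▸ subsingleton_singleton)
  exact singleton_injective (by rw [← htopφ, heq, htop])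

end NormedSpace

section InnerProductSpace

variable {E : Type*} [NormedAddCommGroup E] [InnerProductSpace ℝ E] {A B K L : Set E} {u : E}

lemma inner_reflection_left (S : Submodule ℝ E) [S.HasOrthogonalProjection] (x y : E) :
    ⟪S.reflection x, y⟫_ℝ = ⟪x, S.reflection y⟫_ℝ := by
  rw [LinearIsometryEquiv.inner_map_eq_flip, Submodule.reflection_symm]

lemma reflection_span_singleton_self (u : E) : (ℝ ∙ u).reflection u = u :=
  Submodule.reflection_mem_subspace_eq_self (Submodule.mem_span_singleton_self u)

lemma continuousAt_reflection_span_singleton {m : E} (hm : m ≠ 0) (x : E) :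
    ContinuousAt (fun y ↦ (ℝ ∙ y).reflection x) m := by
  simp only [Submodule.reflection_singleton_apply, RCLike.ofReal_real_eq_id, id_eq]
  have : (‖m‖ ^ 2 : ℝ) ≠ 0 := by positivity
  fun_prop (disch := simpa using hm)

/-- The composition of the reflections in the lines `ℝ m` and `ℝ u`: the rotation in the plane
spanned by `m` and `u` through twice the angle from `m` to `u`. -/
noncomputable def lineRotation (u m : E) : E ≃ₗᵢ[ℝ] E :=
  (ℝ ∙ m).reflection.trans (ℝ ∙ u).reflection

lemma inner_lineRotation (u m x : E) :
    ⟪u, lineRotation u m x⟫_ℝ = ⟪(ℝ ∙ m).reflection u, x⟫_ℝ := by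
  rw [lineRotation, LinearIsometryEquiv.trans_apply, ← inner_reflection_left,
    reflection_span_singleton_self, inner_reflection_left]

lemma inner_lineRotation_add_symm (hu : ‖u‖ = 1) (m x : E) :
    ⟪u, lineRotation u m x⟫_ℝ + ⟪u, (lineRotation u m).symm x⟫_ℝ =
      2 * ⟪u, (ℝ ∙ m).reflection u⟫_ℝ * ⟪u, x⟫_ℝ := by
  have hsymm : (lineRotation u m).symm x = (ℝ ∙ m).reflection ((ℝ ∙ u).reflection x) := rfl
  rw [inner_lineRotation, hsymm, ← inner_reflection_left, Submodule.reflection_singleton_apply u x,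
    real_inner_comm ((ℝ ∙ m).reflection u) u]
  simp only [hu, inner_sub_right, inner_smul_right, two_smul, inner_add_right,
    RCLike.ofReal_real_eq_id, id, one_pow, div_one]
  ring

lemma tendsto_lineRotation_sub_smul (hu : u ≠ 0) (p x : E) :
    Tendsto (fun t : ℝ ↦ lineRotation u (u - t • p) x) (𝓝[>] 0) (𝓝 x) := by
  have hm : Tendsto (fun t : ℝ ↦ u - t • p) (𝓝[>] 0) (𝓝 u) := by
    simpa using (tendsto_smul_nhdsGT_zero p).const_sub u
  have hrefl := (continuousAt_reflection_span_singleton hu x).tendsto.comp hm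
  have := ((ℝ ∙ u).reflection.continuous.tendsto _).comp hrefl
  rwa [Submodule.reflection_reflection] at this

lemma eventually_inner_reflection_sub_smul_pos (hu : ‖u‖ = 1) (p : E) :
    ∀ᶠ t : ℝ in 𝓝[>] 0, ∀ b : E, 0 < ⟪u, b⟫_ℝ → ⟪p, b⟫_ℝ ≤ 0 →
      0 < ⟪(ℝ ∙ (u - t • p)).reflection u, b⟫_ℝ := by
  let κ : ℝ → ℝ := fun t ↦ 2 * (⟪u - t • p, u⟫_ℝ / ‖u - t • p‖ ^ 2)
  have hκ_cont : ContinuousAt κ 0 := by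
    fun_prop (disch := simp [hu])
  have hκ_lim : Tendsto κ (𝓝[>] 0) (𝓝 2) := by
    simpa [κ, ContinuousAt, hu] using hκ_cont.tendsto.mono_left nhdsWithin_le_nhds
  filter_upwards [hκ_lim.eventually_const_lt one_lt_two, self_mem_nhdsWithin] with t hκ ht b hub hpb
  have hrefl : ⟪(ℝ ∙ (u - t • p)).reflection u, b⟫_ℝ =
      κ t * (⟪u, b⟫_ℝ - t * ⟪p, b⟫_ℝ) - ⟪u, b⟫_ℝ := by
    rw [Submodule.reflection_singleton_apply]
    simp only [κ, RCLike.ofReal_real_eq_id, id, two_smul, inner_sub_left, inner_add_left,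
      inner_smul_left, conj_trivial]
    ring
  have htp : 0 ≤ -(t * ⟪p, b⟫_ℝ) := neg_nonneg.2 (mul_nonpos_of_nonneg_of_nonpos ht.le hpb)
  rw [hrefl]
  nlinarith

lemma inner_reflection_sub_smul_lt_one (hu : ‖u‖ = 1) {p : E} (hp : ∀ r : ℝ, p ≠ r • u)
    {t : ℝ} (ht : t ≠ 0) : ⟪u, (ℝ ∙ (u - t • p)).reflection u⟫_ℝ < 1 := by
  rw [inner_lt_one_iff_real_of_norm_eq_one hu (by rw [LinearIsometryEquiv.norm_map, hu])]
  intro hfix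
  obtain ⟨r, hr⟩ := Submodule.mem_span_singleton.1
    ((Submodule.reflection_eq_self_iff u).1 hfix.symm)
  have hr₀ : r ≠ 0 := by
    rintro rfl
    rw [zero_smul] at hr
    simp [← hr] at hu
  refine hp ((r * t)⁻¹ * (r - 1)) ?_
  rw [mul_smul, eq_inv_smul_iff₀ (mul_ne_zero hr₀ ht), sub_smul, one_smul]
  calc (r * t) • p = r • u - r • (u - t • p) := by module
    _ = r • u - u := by rw [hr]

-- Otherwise some hyperplane other than `uᗮ` supports `B` at the apex, and rotating `B` slightly
-- towards it keeps `0` the apex. Both `B` and its rotated copy then agree with `A` near `0`.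
lemma CongruentIntersectionsSymmetric.smoothAtZero [CompleteSpace E] [Nontrivial E]
    (hu : ‖u‖ = 1) (h : CongruentIntersectionsSymmetric A B) (hA : IsApexBody (innerSL ℝ u) A)
    (hB : IsApexBody (innerSL ℝ u) B) (hi : (interior (A ∩ B)).Nonempty) :
    SmoothAtZero (innerSL ℝ u) B := by
  by_contra hs
  obtain ⟨g, hgB, hg⟩ := hB.exists_dual_nonpos_of_not_smoothAtZero hs
  obtain ⟨p, rfl⟩ := (toDual ℝ E).surjective g
  have hp : ∀ r : ℝ, p ≠ r • u := by
    rintro r rfl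
    exact hg r (by ext; simp)
  obtain ⟨a, ha⟩ := hi
  rw [interior_inter] at ha
  have hu₀ : u ≠ 0 := norm_ne_zero_iff.1 (by simp [hu])
  obtain ⟨t, ⟨hpos, htA⟩, ht⟩ := (((eventually_inner_reflection_sub_smul_pos hu p).and
    ((tendsto_lineRotation_sub_smul hu₀ p a).eventually (isOpen_interior.mem_nhds ha.1))).and
    self_mem_nhdsWithin).exists
  set R := lineRotation u (u - t • p)
  have hRB : IsApexBody (innerSL ℝ u) (R '' B) := by
    refine ⟨hB.toIsConvexBody.image R.toIsometryEquiv, ⟨0, hB.zero_mem, map_zero R⟩, ?_⟩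
    rintro _ ⟨b, hb, rfl⟩ hb₀
    rw [innerSL_apply_apply, inner_lineRotation]
    exact hpos b (hB.pos b hb (by rintro rfl; exact hb₀ (map_zero R))) (hgB b hb)
  have hiR : (interior (A ∩ R '' B)).Nonempty := by
    rw [interior_inter]
    refine ⟨R a, htA, ?_⟩
    exact interior_image_isometryEquiv R.toIsometryEquiv B ▸ mem_image_of_mem R ha.2
  have hAB : A =ᶠ[𝓝 0] B :=
    h.reflectedIntersections.eventuallyEq_nhds_zero hA hB ⟨a, by rwa [interior_inter]⟩
  have hAR : A =ᶠ[𝓝 0] R '' B := by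
    have hR := h.image (IsometryEquiv.refl E) R.toIsometryEquiv
    rw [image_isometryEquiv_refl] at hR
    exact hR.reflectedIntersections.eventuallyEq_nhds_zero hA hRB hiR
  exact hB.not_eventuallyEq_image (inner_reflection_sub_smul_lt_one hu hp ht.ne')
    (fun x ↦ inner_lineRotation_add_symm hu _ x) (hAB.symm.trans hAR)

/-! ### Diametral position -/

/-- A convex body with a diameter that issues from the origin in the direction of the unit
vector `u` and has length `D`. -/
structure IsDiametral (u : E) (D : ℝ) (A : Set E) : Prop extends IsConvexBody A where
  zero_mem : 0 ∈ A
  smul_mem : D • u ∈ A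
  dist_le : ∀ a ∈ A, ∀ b ∈ A, dist a b ≤ D

lemma inner_pos_of_norm_smul_sub_le (hu : ‖u‖ = 1) {N : ℝ} {b : E} (h : ‖N • u - b‖ ≤ N)
    (hb : b ≠ 0) : 0 < ⟪u, b⟫_ℝ := by
  have hN : 0 ≤ N := (norm_nonneg _).trans h
  have hsq : ‖N • u - b‖ ^ 2 ≤ N ^ 2 := pow_le_pow_left₀ (norm_nonneg _) h 2
  rw [norm_sub_sq_real, norm_smul, inner_smul_left, hu, Real.norm_of_nonneg hN,
    conj_trivial] at hsq
  have : 0 < ‖b‖ ^ 2 := by positivity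
  nlinarith

namespace IsDiametral

variable {D : ℝ}

lemma pos_length [Nontrivial E] (hA : IsDiametral u D A) : 0 < D := by
  obtain ⟨a, ha, b, hb, hab⟩ := hA.toIsConvexBody.nontrivial
  exact (dist_pos.2 hab).trans_le (hA.dist_le a ha b hb)

lemma isApexBody (hu : ‖u‖ = 1) (hA : IsDiametral u D A) : IsApexBody (innerSL ℝ u) A :=
  ⟨hA.toIsConvexBody, hA.zero_mem, fun a ha ↦ inner_pos_of_norm_smul_sub_le hu
    (dist_eq_norm (D • u) a ▸ hA.dist_le _ hA.smul_mem a ha)⟩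

lemma toExposed_subset (hu : ‖u‖ = 1) (hA : IsDiametral u D A) :
    (innerSL ℝ u).toExposed A ⊆ {D • u} := by
  rintro z ⟨hz, hmax⟩
  have hnorm : ‖z‖ ≤ D := by simpa using hA.dist_le z hz 0 hA.zero_mem
  have hD : 0 ≤ D := (norm_nonneg z).trans hnorm
  have htop : D ≤ ⟪z, u⟫_ℝ := by
    simpa [inner_smul_right, hu, real_inner_comm] using hmax _ hA.smul_mem
  have hsq : ‖z - D • u‖ ^ 2 ≤ 0 := by
    rw [norm_sub_sq_real, norm_smul, inner_smul_right, hu, Real.norm_of_nonneg hD]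
    nlinarith [norm_nonneg z]
  simpa only [mem_singleton_iff, sq_eq_zero_iff, norm_eq_zero, sub_eq_zero] using
    hsq.antisymm (sq_nonneg _)

lemma image (hA : IsDiametral u D A) {T : E ≃ₗᵢ[ℝ] E} (hT : T u = u) :
    IsDiametral u D (T '' A) where
  toIsConvexBody := hA.toIsConvexBody.image T.toIsometryEquiv
  zero_mem := ⟨0, hA.zero_mem, map_zero T⟩
  smul_mem := ⟨D • u, hA.smul_mem, by rw [map_smul, hT]⟩
  dist_le := by
    rintro _ ⟨a, ha, rfl⟩ _ ⟨b, hb, rfl⟩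
    rw [T.dist_map]
    exact hA.dist_le a ha b hb

end IsDiametral

lemma reflection_sub_smul_norm (hu : ‖u‖ = 1) (v : E) :
    (ℝ ∙ (v - ‖v‖ • u))ᗮ.reflection v = ‖v‖ • u :=
  Submodule.reflection_sub (by rw [norm_smul, norm_norm, hu, mul_one])

lemma exists_isApexBody_image_of_isMaxOn_dist (hu : ‖u‖ = 1) (hK : IsConvexBody K) {x z : E}
    (hx : x ∈ K) (hmax : IsMaxOn (dist z) K x) :
    ∃ φ : E ≃ᵢ E, φ x = 0 ∧ φ z = dist z x • u ∧ IsApexBody (innerSL ℝ u) (φ '' K) := by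
  let φ : E ≃ᵢ E := (IsometryEquiv.subRight x).trans
    ((ℝ ∙ (z - x - ‖z - x‖ • u))ᗮ.reflection).toIsometryEquiv
  have hφx : φ x = 0 := by simp [φ]
  have hφz : φ z = dist z x • u := by
    rw [dist_eq_norm]
    exact reflection_sub_smul_norm hu (z - x)
  refine ⟨φ, hφx, hφz, hK.image φ, ⟨x, hx, hφx⟩, ?_⟩
  rintro _ ⟨k, hk, rfl⟩ hk₀
  refine inner_pos_of_norm_smul_sub_le hu (N := dist z x) ?_ hk₀
  rw [← hφz, ← dist_eq_norm, φ.dist_eq]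
  exact hmax hk

lemma exists_isDiametral_image (hu : ‖u‖ = 1) (hK : IsConvexBody K) :
    ∃ (φ : E ≃ᵢ E) (D : ℝ), IsDiametral u D (φ '' K) := by
  have hne := hK.nonempty_interior.mono interior_subset
  obtain ⟨⟨z, x⟩, ⟨hz, hx⟩, hmax⟩ := (hK.isCompact.prod hK.isCompact).exists_isMaxOn
    (hne.prod hne) continuous_dist.continuousOn
  obtain ⟨φ, hφx, hφz, -⟩ := exists_isApexBody_image_of_isMaxOn_dist hu hK hx
    (fun k hk ↦ hmax (mk_mem_prod hz hk))
  refine ⟨φ, dist z x, hK.image φ, ⟨x, hx, hφx⟩, ⟨z, hz, hφz⟩, ?_⟩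
  rintro _ ⟨k, hk, rfl⟩ _ ⟨l, hl, rfl⟩
  rw [φ.dist_eq]
  exact hmax (mk_mem_prod hk hl)

lemma exists_isometry_smul_eq_smul_add_smul (hu : ‖u‖ = 1) {a b : E} (ha : a ∉ ℝ ∙ u)
    (hb : b ∉ ℝ ∙ u) : ∃ T : E ≃ₗᵢ[ℝ] E, T u = u ∧
      ∃ s ∈ Ioc (0 : ℝ) 1, ∃ t ∈ Ioc (0 : ℝ) 1, ∃ r : ℝ, T (t • b) = s • a + r • u := by
  have hne : ∀ x : E, x ∉ ℝ ∙ u → 0 < ‖x - ⟪u, x⟫_ℝ • u‖ := fun x hx ↦ by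
    refine norm_pos_iff.2 fun h ↦ hx ?_
    exact Submodule.mem_span_singleton.2 ⟨_, (sub_eq_zero.1 h).symm⟩
  have horth : ∀ x : E, ⟪x - ⟪u, x⟫_ℝ • u, u⟫_ℝ = 0 := fun x ↦ by
    simp [inner_sub_left, inner_smul_left, hu, real_inner_comm]
  have hv := hne a ha
  have hw := hne b hb
  set v := a - ⟪u, a⟫_ℝ • u with hv_def
  set w := b - ⟪u, b⟫_ℝ • u with hw_def
  set s := ‖w‖ / (‖v‖ + ‖w‖)
  set t := ‖v‖ / (‖v‖ + ‖w‖)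
  set T := (ℝ ∙ (t • w - s • v))ᗮ.reflection
  have hTu : T u = u := Submodule.reflection_mem_subspace_eq_self <|
    Submodule.mem_orthogonal_singleton_iff_inner_right.2 <| by
      simp [inner_sub_left, inner_smul_left, v, w, horth]
  have hTw : T (t • w) = s • v := Submodule.reflection_sub <| by
    rw [norm_smul, norm_smul, Real.norm_of_nonneg (by positivity),
      Real.norm_of_nonneg (by positivity)]
    ring
  refine ⟨T, hTu, s, ⟨by positivity, (div_le_one (by positivity)).2 (by linarith)⟩, t,
    ⟨by positivity, (div_le_one (by positivity)).2 (by linarith)⟩,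
    t * ⟪u, b⟫_ℝ - s * ⟪u, a⟫_ℝ, ?_⟩
  calc T (t • b) = T (t • w + (t * ⟪u, b⟫_ℝ) • u) := by rw [hw_def]; congr 1; module
    _ = s • v + (t * ⟪u, b⟫_ℝ) • u := by rw [map_add, hTw, map_smul, hTu]
    _ = s • a + (t * ⟪u, b⟫_ℝ - s * ⟪u, a⟫_ℝ) • u := by rw [hv_def]; module

lemma IsDiametral.exists_nonempty_interior_inter_image (hE : 1 < finrank ℝ E) (hu : ‖u‖ = 1)
    {D D' : ℝ} (hA : IsDiametral u D A) (hB : IsDiametral u D' B) :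
    ∃ T : E ≃ₗᵢ[ℝ] E, T u = u ∧ (interior (A ∩ T '' B)).Nonempty := by
  have := nontrivial_of_finrank_pos (zero_lt_one.trans hE)
  obtain ⟨a, ha, hau⟩ := exists_mem_interior_notMem_span_singleton hE hA.nonempty_interior u
  obtain ⟨b, hb, hbu⟩ := exists_mem_interior_notMem_span_singleton hE hB.nonempty_interior u
  obtain ⟨T, hTu, s, hs, t, ht, r, hr⟩ := exists_isometry_smul_eq_smul_add_smul hu hau hbu
  have hTB := hB.image hTu
  have hsa : s • a ∈ interior A := (hA.isApexBody hu).smul_mem_interior ha hs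
  have htb : T (t • b) ∈ interior (T '' B) :=
    interior_image_isometryEquiv T.toIsometryEquiv B ▸
      mem_image_of_mem T ((hB.isApexBody hu).smul_mem_interior hb ht)
  refine ⟨T, hTu, ?_⟩
  rw [hr] at htb
  obtain hr₀ | hr₀ := le_total 0 r
  · exact nonempty_interior_inter_of_add_smul_mem hA.convex hTB.convex hA.pos_length hr₀
      hTB.zero_mem hA.smul_mem hsa htb
  · rw [inter_comm]
    exact nonempty_interior_inter_of_add_smul_mem hTB.convex hA.convex hB.pos_length
      (neg_nonneg.2 hr₀) hA.zero_mem hTB.smul_mem htb (by simpa [add_assoc])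

lemma CongruentIntersectionsSymmetric.exists_image_eq_image_isDiametral
    (hE : 1 < finrank ℝ E) (hu : ‖u‖ = 1) (hK : IsConvexBody K) (hL : IsConvexBody L)
    (h : CongruentIntersectionsSymmetric K L) :
    ∃ (φ ψ : E ≃ᵢ E) (D : ℝ), φ '' K = ψ '' L ∧ IsDiametral u D (ψ '' L) ∧
      SmoothAtZero (innerSL ℝ u) (ψ '' L) := by
  have := FiniteDimensional.of_finrank_pos (zero_lt_one.trans hE)
  have := FiniteDimensional.complete ℝ E
  have := nontrivial_of_finrank_pos (zero_lt_one.trans hE)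
  obtain ⟨φ, D, hφ⟩ := exists_isDiametral_image hu hK
  obtain ⟨ψ, D', hψ⟩ := exists_isDiametral_image hu hL
  obtain ⟨T, hTu, hi⟩ := hφ.exists_nonempty_interior_inter_image hE hu hψ
  have hcomp : ψ.trans T.toIsometryEquiv '' L = T '' (ψ '' L) := image_comp T ψ L
  have hTψ := hψ.image hTu
  have hφψ := h.image φ (ψ.trans T.toIsometryEquiv)
  rw [← hcomp] at hTψ hi
  have hs := hφψ.smoothAtZero hu (hφ.isApexBody hu) (hTψ.isApexBody hu) hi
  exact ⟨φ, ψ.trans T.toIsometryEquiv, D', hφψ.reflectedIntersections.eq_of_smoothAtZero hE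
    (hφ.isApexBody hu) (hTψ.isApexBody hu) hs
    (subsingleton_singleton.anti (hφ.toExposed_subset hu))
    (subsingleton_singleton.anti (hTψ.toExposed_subset hu)), hTψ, hs⟩

/-! ### Smooth diametral bodies are balls -/

namespace IsDiametral

variable {D : ℝ}

lemma smul_sub_mem (hu : ‖u‖ = 1) (hB : IsDiametral u D B)
    (h : CongruentIntersectionsSymmetric B B) {x : E} (hx : x ∈ B) : D • u - x ∈ B := by
  have hsymm := h (IsometryEquiv.refl E) (IsometryEquiv.refl E)
  rw [image_isometryEquiv_refl, inter_self] at hsymm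
  obtain ⟨c, hc⟩ := hsymm hB.nonempty_interior
  have hcu : c = D • u := hB.toExposed_subset hu (by
    rw [(hB.isApexBody hu).toExposed_eq_singleton hc, mem_singleton_iff])
  exact hcu ▸ hc x hx

-- For `y` on the sphere with diameter from `0` to `D • u`, let `x` be a point of `B` farthest from
-- the antipode `z` of `y`. The isometry that puts `x` at the apex and `z` above it preserves `B`
-- and its centre, and this forces `x = y`.
lemma sphere_subset (hE : 1 < finrank ℝ E) (hu : ‖u‖ = 1) (hB : IsDiametral u D B)
    (h : CongruentIntersectionsSymmetric B B) (hs : SmoothAtZero (innerSL ℝ u) B) :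
    sphere ((D / 2) • u) (D / 2) ⊆ B := by
  intro y hy
  have := nontrivial_of_finrank_pos (zero_lt_one.trans hE)
  set z := D • u - y with hz
  obtain ⟨x, hx, hmax⟩ := hB.isCompact.exists_isMaxOn ⟨0, hB.zero_mem⟩
    (continuous_const.dist continuous_id : Continuous (dist z)).continuousOn
  obtain ⟨φ, hφx, hφz, hφB⟩ :=
    exists_isApexBody_image_of_isMaxOn_dist hu hB.toIsConvexBody hx hmax
  have hφc := h.map_add_map_zero_eq hE (hB.isApexBody hu)
    (fun x hx ↦ hB.smul_sub_mem hu h hx) hs hφB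
  have hφy : φ y = (D - dist z x) • u := by
    have hsum := isometryEquiv_map_sub_add_map φ (D • u) y
    rw [← hz, hφz, hφc, add_comm, ← eq_sub_iff_add_eq, ← sub_smul] at hsum
    exact hsum
  have hyz : dist y z = D := by
    rw [hz, dist_smul_sub_right, mem_sphere.1 hy]
    ring
  have hdist : |D - dist z x - dist z x| = D := by
    calc |D - dist z x - dist z x| = dist (φ y) (φ z) := by
          rw [hφy, hφz, dist_eq_norm (_ • u) (_ • u), ← sub_smul, norm_smul, hu, mul_one,
            Real.norm_eq_abs]
      _ = D := by rw [φ.dist_eq, hyz]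
  have hfar := dist_pos_of_isMaxOn hB.toIsConvexBody.nontrivial hmax
  have hN : dist z x = D := by
    cases abs_cases (D - dist z x - dist z x) <;> linarith
  have hyx : y = x := φ.injective (by rw [hφy, hφx, hN, sub_self, zero_smul])
  rwa [hyx]

lemma eq_closedBall (hE : 1 < finrank ℝ E) (hu : ‖u‖ = 1) (hB : IsDiametral u D B)
    (h : CongruentIntersectionsSymmetric B B) (hs : SmoothAtZero (innerSL ℝ u) B) :
    B = closedBall ((D / 2) • u) (D / 2) := by
  have := nontrivial_of_finrank_pos (zero_lt_one.trans hE)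
  refine Subset.antisymm (fun b hb ↦ ?_) ?_
  · have hdist := hB.dist_le _ hb _ (hB.smul_sub_mem hu h hb)
    rw [dist_smul_sub_right] at hdist
    rw [mem_closedBall]
    linarith
  · rw [← convexHull_sphere_eq_closedBall _ (half_pos hB.pos_length).le]
    exact convexHull_min (hB.sphere_subset hE hu h hs) hB.convex

end IsDiametral

theorem stmt_14_general (hE : 1 < finrank ℝ E) (hK : IsConvexBody K) (hL : IsConvexBody L)
    (h : CongruentIntersectionsSymmetric K L) :
    ∃ (r : ℝ) (c₁ c₂ : E), 0 < r ∧ K = closedBall c₁ r ∧ L = closedBall c₂ r := by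
  have := nontrivial_of_finrank_pos (zero_lt_one.trans hE)
  obtain ⟨u, hu⟩ := exists_norm_eq E zero_le_one
  obtain ⟨φ, ψ, D, hφψ, hψ, hs⟩ := h.exists_image_eq_image_isDiametral hE hu hK hL
  have hball := hψ.eq_closedBall hE hu (hφψ ▸ h.image φ ψ) hs
  refine ⟨D / 2, φ.symm ((D / 2) • u), ψ.symm ((D / 2) • u), half_pos hψ.pos_length, ?_, ?_⟩
  · rw [← φ.preimage_closedBall, ← hball, ← hφψ, preimage_image_eq _ φ.injective]
  · rw [← ψ.preimage_closedBall, ← hball, preimage_image_eq _ ψ.injective]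

end InnerProductSpace

lemma CentrallySymmetric.pointSymmetric {S : Set (EuclideanSpace ℝ (Fin 2))}
    (hS : CentrallySymmetric S) : PointSymmetric S := by
  obtain ⟨c, hc⟩ := hS
  exact ⟨(2 : ℝ) • c, fun x hx ↦ hc ▸ mem_image_of_mem _ hx⟩

end Development

/-- If all intersections with interior points of congruent copies of two planar convex
bodies are centrally symmetric, then the two bodies are closed disks of the same
radius. -/
theorem stmt_14 (K L : Set (EuclideanSpace ℝ (Fin 2)))
    (hKc : IsCompact K) (hKconv : Convex ℝ K) (hKint : (interior K).Nonempty)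
    (hLc : IsCompact L) (hLconv : Convex ℝ L) (hLint : (interior L).Nonempty)
    (h : ∀ φ ψ : EuclideanSpace ℝ (Fin 2) ≃ᵢ EuclideanSpace ℝ (Fin 2),
      (interior ((φ '' K) ∩ (ψ '' L))).Nonempty →
      CentrallySymmetric ((φ '' K) ∩ (ψ '' L))) :
    ∃ (r : ℝ) (c₁ c₂ : EuclideanSpace ℝ (Fin 2)), 0 < r ∧
      K = closedBall c₁ r ∧ L = closedBall c₂ r :=
  stmt_14_general (by simp) ⟨hKconv, hKc, hKint⟩ ⟨hLconv, hLc, hLint⟩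
    fun φ ψ hi ↦ (h φ ψ hi).pointSymmetric
end
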